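/- Let W be the Weyl group of type A_n with simple reflections s_1, …, s_n, fix 1 ≤ i ≤ n, set κ = (n+1)/gcd(n+1, i) and J = {j ∈ {1,…,n} : κ does not divide j}. Then the set of elements of minimal length in the conjugacy class of (s_1 s_2 ⋯ s_n)^i in W equals the set of Coxeter elements of the standard parabolic subgroup W_J; in particular, the minimal length in this conjugacy class equals |J| = n + 1 − gcd(n+1, i), and it also equals the minimal reflection length among elements of the class. -/

import Mathlib

noncomputable section
open CoxeterMatrix

/-- The Weyl group of type `Aₙ`, given by its Coxeter presentation. -/
abbrev WA (n : ℕ) := (Aₙ n).Group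

/-- The canonical Coxeter system of type `Aₙ`. -/
def csA (n : ℕ) : CoxeterSystem (Aₙ n) (WA n) := (Aₙ n).toCoxeterSystem

/-- `segA n a b` is the product `s_a s_{a+1} ⋯ s_b` of the simple reflections with
Bourbaki labels `a, a+1, …, b` (so `s_j`, `1 ≤ j ≤ n`, is `(csA n).simple ⟨j-1, _⟩`). -/
def segA (n a b : ℕ) : WA n :=
  (((List.finRange n).filter fun k : Fin n => a ≤ (k : ℕ) + 1 ∧ (k : ℕ) + 1 ≤ b).map
    (csA n).simple).prod

/-- The standard parabolic subgroup of the type-`Aₙ` Weyl group generated by all simple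
reflections except the one with (zero-based) index `i`. -/
def paraA (n : ℕ) (i : Fin n) : Subgroup (WA n) :=
  Subgroup.closure ((csA n).simple '' {j : Fin n | j ≠ i})

/-- The reflection length on the type-`Aₙ` Weyl group: the least number of reflections
(conjugates of simple reflections) whose product is `w`. -/
def reflLenA (n : ℕ) (w : WA n) : ℕ :=
  sInf {k : ℕ | ∃ l : List (WA n), (∀ t ∈ l, (csA n).IsReflection t) ∧
    l.length = k ∧ w = l.prod}


open Equiv

/-! ### The type `Aₙ` Weyl group as a symmetric group -/

theorem isLiftable_swap_castSucc_succ (n : ℕ) :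
    (CoxeterMatrix.A n).IsLiftable fun j : Fin n => swap j.castSucc j.succ := by
  have three : ∀ {a b c : Fin (n + 1)}, a ≠ b → a ≠ c → b ≠ c →
      (swap a b * swap a c) ^ 3 = 1 := fun hab hac hbc => by
    rw [← (Perm.isThreeCycle_swap_mul_swap_same hab hac hbc).orderOf]
    exact pow_orderOf_eq_one _
  intro i j
  simp only [CoxeterMatrix.A, Matrix.of_apply]
  split_ifs with h1 h2
  · simp [h1]
  · rcases h2 with h2 | h2
    · have : j.succ = i.castSucc := Fin.ext (by simpa using h2)
      rw [swap_comm j.castSucc, this]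
      refine three ?_ ?_ ?_ <;> simp [Fin.ext_iff] <;> omega
    · have : i.succ = j.castSucc := Fin.ext (by simpa using h2)
      rw [swap_comm i.castSucc, this]
      refine three ?_ ?_ ?_ <;> simp [Fin.ext_iff] <;> omega
  · have hd : Perm.Disjoint (swap i.castSucc i.succ) (swap j.castSucc j.succ) := by
      intro x
      by_cases hx : x = i.castSucc ∨ x = i.succ
      · right
        refine swap_apply_of_ne_of_ne ?_ ?_ <;>
          rcases hx with rfl | rfl <;> simp [Fin.ext_iff] at * <;> omega
      · left
        push Not at hx
        exact swap_apply_of_ne_of_ne hx.1 hx.2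
    rw [hd.commute.mul_pow]
    simp [pow_two]

/-- The action of the type `Aₙ` Weyl group on `{0, …, n}` by permutations. -/
def permHom (n : ℕ) : WA n →* Perm (Fin (n + 1)) :=
  (csA n).lift ⟨fun j => swap j.castSucc j.succ, isLiftable_swap_castSucc_succ n⟩

@[simp]
theorem permHom_simple (n : ℕ) (j : Fin n) :
    permHom n ((csA n).simple j) = swap j.castSucc j.succ :=
  (csA n).lift_apply_simple _ _

theorem simple_commute {n : ℕ} {i j : Fin n} (h : (i : ℕ) + 2 ≤ j) :
    (csA n).simple i * (csA n).simple j = (csA n).simple j * (csA n).simple i := by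
  have h2 : (CoxeterMatrix.A n) i j = 2 := by
    change (if i = j then 1 else _) = 2
    rw [if_neg (by rintro rfl; omega), if_neg (by omega)]
  have : ((csA n).simple i * (csA n).simple j) ^ (CoxeterMatrix.A n) i j = 1 :=
    (csA n).simple_mul_simple_pow i j
  rw [h2, pow_two] at this
  rw [eq_inv_of_mul_eq_one_left this]
  simp

theorem simple_braid {n : ℕ} {i j : Fin n} (h : (i : ℕ) + 1 = j) :
    (csA n).simple j * (csA n).simple i * (csA n).simple j =
      (csA n).simple i * (csA n).simple j * (csA n).simple i := by
  have h2 : (CoxeterMatrix.A n) i j = 3 := by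
    change (if i = j then 1 else _) = 3
    rw [if_neg (by rintro rfl; omega), if_pos (by omega)]
  have : ((csA n).simple i * (csA n).simple j) ^ (CoxeterMatrix.A n) i j = 1 :=
    (csA n).simple_mul_simple_pow i j
  have key : (csA n).simple i * (csA n).simple j * (csA n).simple i *
      ((csA n).simple j * (csA n).simple i * (csA n).simple j) = 1 := by
    rw [← this, h2, pow_three]
    group
  rw [eq_inv_of_mul_eq_one_left key]
  simp [mul_assoc]

/-- The inclusion of the Weyl group of type `Aₙ` in that of type `Aₙ₊₁` as the parabolic subgroup
omitting the last simple reflection. -/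
def succHom (n : ℕ) : WA n →* WA (n + 1) :=
  (csA n).lift ⟨fun j => (csA (n + 1)).simple j.castSucc, fun i j => by
    have h : (CoxeterMatrix.A n) i j = (CoxeterMatrix.A (n + 1)) i.castSucc j.castSucc := by
      simp [CoxeterMatrix.A, Fin.ext_iff]
    exact h ▸ (csA (n + 1)).simple_mul_simple_pow i.castSucc j.castSucc⟩

theorem succHom_simple (n : ℕ) (j : Fin n) :
    succHom n ((csA n).simple j) = (csA (n + 1)).simple j.castSucc :=
  (csA n).lift_apply_simple _ _

theorem permHom_succHom_castSucc (n : ℕ) (w : WA n) (x : Fin (n + 1)) :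
    permHom (n + 1) (succHom n w) x.castSucc = (permHom n w x).castSucc := by
  induction w using (csA n).simple_induction_left generalizing x with
  | one => simp
  | mul_simple_left w j ih =>
    simp only [map_mul, succHom_simple, permHom_simple, Perm.mul_apply, ih]
    rw [← Fin.castSucc_succ, (Fin.castSucc_injective (n + 1)).swap_apply]

theorem permHom_succHom_last (n : ℕ) (w : WA n) :
    permHom (n + 1) (succHom n w) (Fin.last (n + 1)) = Fin.last (n + 1) := by
  induction w using (csA n).simple_induction_left with
  | one => simp
  | mul_simple_left w j ih =>
    simp only [map_mul, succHom_simple, permHom_simple, Perm.mul_apply, ih]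
    refine swap_apply_of_ne_of_ne ?_ ?_ <;> simp [Fin.ext_iff] <;> omega

/-- The product `s_{n-m+1} ⋯ s_{n-1} s_n` (zero-based indices) of the last `m` simple reflections
in type `Aₙ₊₁`; these are the minimal coset representatives of the parabolic subgroup of
type `Aₙ`. -/
def cosetRep (n : ℕ) : ℕ → WA (n + 1)
  | 0 => 1
  | m + 1 => (csA (n + 1)).simple ⟨n - m, by omega⟩ * cosetRep n m

theorem permHom_cosetRep_last (n m : ℕ) (hm : m ≤ n + 1) :
    (permHom (n + 1) (cosetRep n m) (Fin.last (n + 1)) : ℕ) = n + 1 - m := by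
  induction m with
  | zero => simp [cosetRep]
  | succ m ih =>
    have h : permHom (n + 1) (cosetRep n m) (Fin.last (n + 1)) =
        Fin.succ ⟨n - m, by omega⟩ := Fin.ext (by rw [ih (by omega)]; simp; omega)
    simp only [cosetRep, map_mul, permHom_simple, Perm.mul_apply, h, swap_apply_right]
    simp

theorem simple_mul_cosetRep_of_lt {n m : ℕ} {j : Fin (n + 1)} (h : (j : ℕ) + m < n) :
    (csA (n + 1)).simple j * cosetRep n m = cosetRep n m * (csA (n + 1)).simple j := by
  induction m with
  | zero => simp [cosetRep]
  | succ m ih =>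
    rw [cosetRep, ← mul_assoc, simple_commute (by simp; omega), mul_assoc, ih (by omega), mul_assoc]

theorem simple_succ_mul_cosetRep {n m : ℕ} (hm : m ≤ n + 1) {j : Fin n} (h : n < (j : ℕ) + m) :
    (csA (n + 1)).simple j.succ * cosetRep n m =
      cosetRep n m * (csA (n + 1)).simple j.castSucc := by
  induction m with
  | zero => omega
  | succ m ih =>
    rw [cosetRep]
    rcases Nat.lt_or_ge n (j + m) with h' | h'
    · rw [← mul_assoc, ← simple_commute (by simp; omega), mul_assoc, ih (by omega) h', mul_assoc]
    · obtain ⟨m, rfl⟩ : ∃ k, m = k + 1 := ⟨m - 1, by omega⟩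
      have h1 : (⟨n - (m + 1), by omega⟩ : Fin (n + 1)) = j.castSucc := Fin.ext (by simp; omega)
      have h2 : (⟨n - m, by omega⟩ : Fin (n + 1)) = j.succ := Fin.ext (by simp; omega)
      rw [cosetRep, h1, h2, ← mul_assoc, ← mul_assoc, simple_braid (by simp), mul_assoc,
        simple_mul_cosetRep_of_lt (by simp; omega)]
      simp only [mul_assoc]

theorem exists_eq_cosetRep_mul_succHom (n : ℕ) (w : WA (n + 1)) :
    ∃ m ≤ n + 1, ∃ v : WA n, w = cosetRep n m * succHom n v := by
  induction w using (csA (n + 1)).simple_induction_left with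
  | one => exact ⟨0, by omega, 1, by simp [cosetRep]⟩
  | mul_simple_left w j ih =>
    obtain ⟨m, hm, v, rfl⟩ := ih
    rcases lt_trichotomy ((j : ℕ) + m) n with h | h | h
    · refine ⟨m, hm, (csA n).simple ⟨j, by omega⟩ * v, ?_⟩
      rw [← mul_assoc, simple_mul_cosetRep_of_lt h, map_mul, succHom_simple, mul_assoc]
      rfl
    · refine ⟨m + 1, by omega, v, ?_⟩
      have : (⟨n - m, by omega⟩ : Fin (n + 1)) = j := Fin.ext (by simp; omega)
      rw [cosetRep, this, mul_assoc]
    · rcases (show n + 1 ≤ j + m from h).eq_or_lt with h | h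
      · obtain ⟨m, rfl⟩ : ∃ k, m = k + 1 := ⟨m - 1, by omega⟩
        refine ⟨m, by omega, v, ?_⟩
        have : (⟨n - m, by omega⟩ : Fin (n + 1)) = j := Fin.ext (by simp; omega)
        rw [cosetRep, this, mul_assoc, CoxeterSystem.simple_mul_simple_cancel_left]
      · obtain ⟨k, rfl⟩ : ∃ k : Fin n, j = k.succ :=
          ⟨⟨j - 1, by omega⟩, Fin.ext (by simp; omega)⟩
        refine ⟨m, hm, (csA n).simple k * v, ?_⟩
        rw [← mul_assoc, simple_succ_mul_cosetRep hm (by simp at h; omega), map_mul,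
          succHom_simple, mul_assoc]

theorem permHom_injective (n : ℕ) : Function.Injective (permHom n) := by
  rw [injective_iff_map_eq_one]
  induction n with
  | zero =>
    intro w _
    induction w using (csA 0).simple_induction_left with
    | one => rfl
    | mul_simple_left w j ih => exact j.elim0
  | succ n ih =>
    intro w hw
    obtain ⟨m, hm, v, rfl⟩ := exists_eq_cosetRep_mul_succHom n w
    have hlast := permHom_cosetRep_last n m hm
    rw [← permHom_succHom_last n v, ← Perm.mul_apply, ← map_mul, hw] at hlast
    obtain rfl : m = 0 := by simp at hlast; omega
    simp only [cosetRep, one_mul] at hw ⊢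
    rw [ih v (Equiv.ext fun x => Fin.castSucc_injective _ ?_), map_one]
    rw [← permHom_succHom_castSucc, hw]
    rfl

theorem permHom_surjective (n : ℕ) : Function.Surjective (permHom n) := by
  rw [← MonoidHom.mrange_eq_top, eq_top_iff, ← Perm.mclosure_swap_castSucc_succ,
    Submonoid.closure_le]
  rintro _ ⟨j, rfl⟩
  exact ⟨_, permHom_simple n j⟩

theorem isConj_permHom_iff {n : ℕ} {v w : WA n} :
    IsConj (permHom n v) (permHom n w) ↔ IsConj v w := by
  refine ⟨fun h => ?_, fun h => (permHom n).map_isConj h⟩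
  obtain ⟨τ, hτ⟩ := isConj_iff.1 h
  obtain ⟨u, rfl⟩ := permHom_surjective n τ
  exact isConj_iff.2 ⟨u, permHom_injective n (by simpa using hτ)⟩

theorem permHom_wordProd {n : ℕ} (l : List (Fin n)) :
    permHom n ((csA n).wordProd l) = (l.map fun j => swap j.castSucc j.succ).prod := by
  induction l with
  | nil => simp
  | cons j l ih => simp [CoxeterSystem.wordProd_cons, ih]

theorem segA_one_eq (n : ℕ) : segA n 1 n = (csA n).wordProd (List.finRange n) := by
  rw [segA, CoxeterSystem.wordProd, List.filter_eq_self.2]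
  simp

theorem segA_one_succ (n : ℕ) :
    segA (n + 1) 1 (n + 1) = succHom n (segA n 1 n) * (csA (n + 1)).simple (Fin.last n) := by
  simp only [segA_one_eq, List.finRange_succ_last, CoxeterSystem.wordProd, List.map_append,
    List.map_map, List.prod_append, map_list_prod, List.map_cons, List.map_nil, List.prod_singleton]
  congr 3

theorem permHom_segA (n : ℕ) : permHom n (segA n 1 n) = finRotate (n + 1) := by
  induction n with
  | zero => exact Equiv.ext fun x => Subsingleton.elim (α := Fin 1) _ _
  | succ n ih =>
    ext x
    rw [segA_one_succ, map_mul, Perm.mul_apply, permHom_simple]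
    induction x using Fin.lastCases with
    | last =>
      rw [Fin.succ_last, swap_apply_right, permHom_succHom_castSucc, ih]
      simp
    | cast y =>
      by_cases hy : y = Fin.last n
      · subst hy
        rw [Fin.succ_last, swap_apply_left, permHom_succHom_last, coe_finRotate_of_ne_last]
        · simp
        · simp [Fin.ext_iff]
      · rw [swap_apply_of_ne_of_ne, permHom_succHom_castSucc, ih, coe_finRotate_of_ne_last]
        · exact coe_finRotate_of_ne_last hy
        · simp [Fin.ext_iff]; omega
        · simpa using hy
        · simp [Fin.ext_iff]; omega

/-! ### Functions invariant under a product of transpositions -/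

/-- A function that takes equal values on the two points of each transposition is invariant under
the product of these transpositions. -/
theorem apply_prod_swap {α β ι : Type*} [DecidableEq α] (a b : ι → α) (f : α → β) (l : List ι)
    (h : ∀ j ∈ l, f (a j) = f (b j)) (x : α) :
    f ((l.map fun j => swap (a j) (b j)).prod x) = f x := by
  induction l with
  | nil => rfl
  | cons j l ih =>
    have hj := h j (by simp)
    rw [List.map_cons, List.prod_cons, Perm.mul_apply, ← ih fun k hk => h k (by simp [hk])]
    generalize (l.map fun j => swap (a j) (b j)).prod x = y
    rw [swap_apply_def]
    split_ifs with h1 h2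
    · rw [h1, hj]
    · rw [h2, hj]
    · rfl

/-- If every function that is constant on the pairs in `E` is `σ`-invariant, and `σ`-invariant
functions are determined by their values at `g` points, then `E` has at least `card α - g`
elements. -/
theorem card_le_card_add_of_invariant {α : Type*} [Fintype α] (σ : Perm α) (E : Finset (α × α))
    (hE : ∀ f : α → ℚ, (∀ p ∈ E, f p.1 = f p.2) → ∀ x, f (σ x) = f x) {g : ℕ} (b : Fin g → α)
    (hb : ∀ f : α → ℚ, (∀ x, f (σ x) = f x) → (∀ k, f (b k) = 0) → f = 0) :
    Fintype.card α ≤ E.card + g := by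
  let T : (α → ℚ) →ₗ[ℚ] (E → ℚ) × (Fin g → ℚ) :=
    { toFun := fun f => (fun p => f p.1.1 - f p.1.2, fun k => f (b k))
      map_add' := fun _ _ => by ext <;> simp; ring
      map_smul' := fun c f => by ext <;> simp; ring }
  have hT : Function.Injective T := by
    rw [injective_iff_map_eq_zero]
    intro f hf
    refine hb f (hE f fun p hp => ?_) fun k => ?_
    · have := congrFun (congrArg Prod.fst hf) ⟨p, hp⟩
      exact sub_eq_zero.1 this
    · exact congrFun (congrArg Prod.snd hf) k
  simpa using LinearMap.finrank_le_finrank_of_injective hT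

/-- A rational function invariant under a product of distinct simple transpositions is invariant
under each of them. -/
theorem apply_castSucc_eq_apply_succ {n : ℕ} {l : List (Fin n)} (hl : l.Nodup)
    {f : Fin (n + 1) → ℚ}
    (hf : ∀ x, f ((l.map fun j => swap j.castSucc j.succ).prod x) = f x) :
    ∀ j ∈ l, f j.castSucc = f j.succ := by
  induction l with
  | nil => simp
  | cons j l ih =>
    obtain ⟨hj, hl⟩ := List.nodup_cons.1 hl
    simp only [List.map_cons, List.prod_cons, Perm.mul_apply] at hf
    set σ := (l.map fun j => swap j.castSucc j.succ).prod with hσ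
    have hA : ∀ x, σ x ≤ j.castSucc ↔ x ≤ j.castSucc := fun x => by
      refine iff_of_eq (apply_prod_swap _ _ (fun x => x ≤ j.castSucc) l (fun k hk => ?_) x)
      have : (k : ℕ) ≠ j := fun h => hj (Fin.ext h ▸ hk)
      simp only [eq_iff_iff, Fin.le_iff_val_le_val, Fin.val_castSucc, Fin.val_succ]
      omega
    have hsum : ∑ x with x ≤ j.castSucc, f (swap j.castSucc j.succ x) =
        ∑ x with x ≤ j.castSucc, f x := by
      rw [Finset.sum_congr rfl fun x _ => (hf x).symm]
      refine (Finset.sum_equiv σ (fun x => ?_) fun x _ => rfl).symm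
      simp [hA]
    have hjj : f j.castSucc = f j.succ := by
      have hmem : j.castSucc ∈ Finset.univ.filter (· ≤ j.castSucc) := by simp
      rw [← Finset.add_sum_erase _ _ hmem, ← Finset.add_sum_erase _ f hmem, swap_apply_left,
        Finset.sum_congr rfl fun x hx => ?_] at hsum
      · exact (add_right_cancel hsum).symm
      · rw [swap_apply_of_ne_of_ne]
        · exact Finset.ne_of_mem_erase hx
        · rintro rfl
          simp [Fin.le_def] at hx
    have hswap : ∀ y, f (swap j.castSucc j.succ y) = f y := fun y => by
      simpa using apply_prod_swap Fin.castSucc Fin.succ f [j] (by simpa using hjj) y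
    intro k hk
    rcases List.mem_cons.1 hk with rfl | hk
    · exact hjj
    · exact ih hl (fun x => by rw [← hswap, hf]) k hk

/-! ### Permutations all of whose cycles have the same length -/

theorem apply_eq_of_sameCycle {α β : Type*} {σ : Perm α} {f : α → β} (hf : ∀ x, f (σ x) = f x)
    {x y : α} (h : σ.SameCycle x y) : f x = f y := by
  have hinv : ∀ x, f (σ⁻¹ x) = f x := fun x => by
    rw [← hf (σ⁻¹ x), ← Perm.mul_apply, mul_inv_cancel, Perm.one_apply]
  obtain ⟨k, rfl⟩ := h
  induction k using Int.induction_on with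
  | zero => rfl
  | succ k ih => rw [add_comm, zpow_add, zpow_one, Perm.mul_apply, hf, ← ih]
  | pred k ih => rw [sub_eq_neg_add, zpow_add, zpow_neg_one, Perm.mul_apply, hinv, ← ih]

theorem cycleType_eq_replicate {α : Type*} [Fintype α] [DecidableEq α] {σ : Perm α} {κ : ℕ}
    (hκ : 2 ≤ κ)
    (h : ∀ x, (Finset.univ.filter (σ.SameCycle x)).card = κ) :
    σ.cycleType = Multiset.replicate (Fintype.card α / κ) κ := by
  have hfix : ∀ x, σ x ≠ x := fun x hx => by
    have : Finset.univ.filter (σ.SameCycle x) ⊆ {x} := fun y hy => by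
      have hy' : σ.SameCycle x y := by simpa using hy
      simpa using (hy'.eq_of_left hx).symm
    have := Finset.card_le_card this
    rw [h, Finset.card_singleton] at this
    omega
  have hmem : ∀ m ∈ σ.cycleType, m = κ := by
    intro m hm
    rw [Perm.cycleType_def, Multiset.mem_map] at hm
    obtain ⟨c, hc, rfl⟩ := hm
    obtain ⟨x, hx⟩ := (Perm.mem_cycleFactorsFinset_iff.1 hc).1.nonempty_support
    rw [Perm.cycle_is_cycleOf hx hc, ← h x]
    refine congrArg Finset.card (Finset.ext fun y => ?_)
    simp [Perm.mem_support_cycleOf_iff' (hfix x)]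
  have hrep := Multiset.eq_replicate_card.2 hmem
  have hsum := σ.sum_cycleType
  have hsupp : σ.support = Finset.univ := by ext x; simp [hfix]
  rw [hsupp, Finset.card_univ, hrep, Multiset.sum_replicate, smul_eq_mul] at hsum
  rw [← hsum, Nat.mul_div_cancel _ (by omega)]
  exact hrep

theorem dvd_card_of_invariant {α : Type*} [Fintype α] [DecidableEq α] {σ : Perm α} {κ : ℕ}
    (h : ∀ x, (Finset.univ.filter (σ.SameCycle x)).card = κ) {A : Finset α}
    (hA : ∀ x, σ x ∈ A ↔ x ∈ A) : κ ∣ A.card := by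
  rw [Finset.card_eq_sum_card_image (fun x => Finset.univ.filter (σ.SameCycle x)) A]
  refine Finset.dvd_sum fun C hC => ?_
  obtain ⟨x, hx, rfl⟩ := Finset.mem_image.1 hC
  rw [← h x]
  refine dvd_of_eq (congrArg Finset.card (Finset.ext fun y => ?_))
  simp only [Finset.mem_filter, Finset.mem_univ, true_and, Finset.ext_iff]
  refine ⟨fun hxy => ⟨?_, fun z => ⟨hxy.trans, hxy.symm.trans⟩⟩, fun hy => ?_⟩
  · exact (iff_of_eq (apply_eq_of_sameCycle (f := (· ∈ A)) (fun x => propext (hA x)) hxy)).1 hx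
  · exact (hy.2 y).1 (Perm.SameCycle.refl _ _)

theorem card_sameCycle_conj {α : Type*} [Fintype α] [DecidableEq α] {σ τ : Perm α} {κ : ℕ}
    (h : ∀ x, (Finset.univ.filter (σ.SameCycle x)).card = κ) (x : α) :
    (Finset.univ.filter ((τ * σ * τ⁻¹).SameCycle x)).card = κ := by
  rw [← h (τ⁻¹ x)]
  refine Finset.card_equiv τ⁻¹ fun y => ?_
  simp [Perm.sameCycle_conj]

/-! ### Powers of the rotation -/

theorem finRotate_zpow_modEq (n : ℕ) (k : ℤ) (x : Fin (n + 1)) :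
    (((finRotate (n + 1) ^ k) x : ℕ) : ℤ) ≡ (x : ℕ) + k [ZMOD ((n + 1 : ℕ) : ℤ)] := by
  have step : ∀ y : Fin (n + 1),
      ((finRotate (n + 1) y : ℕ) : ℤ) ≡ (y : ℕ) + 1 [ZMOD ((n + 1 : ℕ) : ℤ)] := fun y => by
    rw [coe_finRotate]
    split_ifs with h
    · rw [h]
      simp [Int.ModEq]
    · simp [Int.ModEq.refl]
  induction k using Int.induction_on with
  | zero => simp [Int.ModEq.refl]
  | succ k ih =>
    rw [add_comm (k : ℤ), zpow_add, zpow_one, Perm.mul_apply]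
    exact (step _).trans ((ih.add_right 1).trans (by ring_nf; rfl))
  | pred k ih =>
    have h := step ((finRotate (n + 1) ^ (-(k : ℤ) - 1)) x)
    rw [← Perm.mul_apply, ← zpow_one_add, add_sub_cancel] at h
    exact Int.ModEq.add_right_cancel' 1 (h.symm.trans (ih.trans (by ring_nf; rfl)))

theorem sameCycle_finRotate_pow_iff (n i : ℕ) (x y : Fin (n + 1)) :
    (finRotate (n + 1) ^ i).SameCycle x y ↔ (x : ℕ) ≡ y [MOD Nat.gcd (n + 1) i] := by
  have hpow : ∀ k : ℤ, (finRotate (n + 1) ^ i) ^ k = finRotate (n + 1) ^ ((i : ℤ) * k) :=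
    fun k => by rw [zpow_mul, zpow_natCast]
  constructor
  · rintro ⟨k, rfl⟩
    rw [hpow, ← Int.natCast_modEq_iff]
    have h := (finRotate_zpow_modEq n (i * k) x).of_dvd
      (Int.natCast_dvd_natCast.2 (Nat.gcd_dvd_left (n + 1) i))
    refine (h.trans ?_).symm
    refine (Int.modEq_iff_dvd.2 ?_)
    have : ((Nat.gcd (n + 1) i : ℕ) : ℤ) ∣ i := Int.natCast_dvd_natCast.2 (Nat.gcd_dvd_right _ _)
    simpa using this.mul_right k
  · intro h
    obtain ⟨t, ht⟩ := Nat.modEq_iff_dvd.1 h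
    refine ⟨Nat.gcdB (n + 1) i * t, ?_⟩
    have h1 := finRotate_zpow_modEq n (i * (Nat.gcdB (n + 1) i * t)) x
    rw [← hpow] at h1
    have h2 : ((x : ℕ) : ℤ) + i * (Nat.gcdB (n + 1) i * t) ≡ (y : ℕ)
        [ZMOD ((n + 1 : ℕ) : ℤ)] := by
      rw [Nat.gcd_eq_gcd_ab] at ht
      refine Int.modEq_iff_dvd.2 ⟨Nat.gcdA (n + 1) i * t, ?_⟩
      linear_combination ht
    have h3 := Int.natCast_modEq_iff.1 (h1.trans h2)
    exact Fin.ext (Nat.ModEq.eq_of_lt_of_lt h3 (Fin.is_lt _) (Fin.is_lt _))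

theorem card_sameCycle_finRotate_pow (n i : ℕ) (x : Fin (n + 1)) :
    (Finset.univ.filter ((finRotate (n + 1) ^ i).SameCycle x)).card =
      (n + 1) / Nat.gcd (n + 1) i := by
  obtain ⟨κ, hκ⟩ := Nat.gcd_dvd_left (n + 1) i
  have hg : 0 < Nat.gcd (n + 1) i := Nat.gcd_pos_of_pos_left _ (by omega)
  simp only [sameCycle_finRotate_pow_iff]
  generalize Nat.gcd (n + 1) i = g at *
  conv_rhs => rw [hκ, Nat.mul_div_cancel_left _ hg, ← Finset.card_range κ]
  have hx := Nat.mod_lt (x : ℕ) hg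
  symm
  refine Finset.card_bij (fun t ht => ⟨x % g + g * t, ?_⟩) (fun t ht => ?_) (fun s _ t _ h => ?_)
    fun y hy => ?_
  · have : g * (t + 1) ≤ g * κ := Nat.mul_le_mul_left _ (by simpa using ht)
    rw [mul_add] at this
    omega
  · exact Finset.mem_filter.2 ⟨Finset.mem_univ _, by simp [Nat.ModEq]⟩
  · have : g * s = g * t := by simpa using h
    exact Nat.eq_of_mul_eq_mul_left hg this
  · have hy' : (x : ℕ) % g = y % g := (Finset.mem_filter.1 hy).2
    refine ⟨y / g, ?_, Fin.ext ?_⟩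
    · rw [Finset.mem_range, Nat.div_lt_iff_lt_mul hg, mul_comm, ← hκ]
      exact y.2
    · simp only [hy']
      exact Nat.mod_add_div _ _

theorem le_card_add_gcd_of_isConj {n i : ℕ} {σ : Perm (Fin (n + 1))}
    (hσ : IsConj (finRotate (n + 1) ^ i) σ) (E : Finset (Fin (n + 1) × Fin (n + 1)))
    (hE : ∀ f : Fin (n + 1) → ℚ, (∀ p ∈ E, f p.1 = f p.2) → ∀ x, f (σ x) = f x) :
    n + 1 ≤ E.card + Nat.gcd (n + 1) i := by
  obtain ⟨τ, rfl⟩ := isConj_iff.1 hσ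
  have hg : 0 < Nat.gcd (n + 1) i := Nat.gcd_pos_of_pos_left _ (by omega)
  have hgn : Nat.gcd (n + 1) i ≤ n + 1 := Nat.gcd_le_left _ (by omega)
  have := card_le_card_add_of_invariant _ E hE
    (fun k : Fin (Nat.gcd (n + 1) i) => τ (k.castLE hgn)) fun f hf hf0 => ?_
  · simpa using this
  funext y
  obtain ⟨x, rfl⟩ := τ.surjective y
  rw [Pi.zero_apply, ← hf0 ⟨x % Nat.gcd (n + 1) i, Nat.mod_lt _ hg⟩]
  refine apply_eq_of_sameCycle (f := fun x => f (τ x)) (fun z => ?_)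
    ((sameCycle_finRotate_pow_iff n i _ _).2 ?_)
  · simpa using hf (τ z)
  · simp [Nat.ModEq]

/-! ### Coxeter elements of parabolic subgroups -/

theorem card_filter_dvd_succ {n κ g : ℕ} (hn : n + 1 = g * κ) :
    (Finset.univ.filter fun j : Fin n => κ ∣ (j : ℕ) + 1).card = g - 1 := by
  have hκ : 0 < κ := Nat.pos_of_ne_zero (by rintro rfl; simp at hn)
  have hg : 0 < g := Nat.pos_of_ne_zero (by rintro rfl; simp at hn)
  have hdiv : n / κ = g - 1 := by
    obtain ⟨g, rfl⟩ : ∃ k, g = k + 1 := ⟨g - 1, by omega⟩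
    rw [add_mul, one_mul] at hn
    rw [Nat.div_eq_of_lt_le] <;> simp [add_mul] <;> omega
  rw [← hdiv, ← Nat.card_multiples]
  refine Finset.card_bij (fun j _ => (j : ℕ)) (fun j hj => ?_) (fun j _ k _ h => Fin.ext h)
    fun e he => ?_
  · simpa using hj
  · obtain ⟨h1, h2⟩ := Finset.mem_filter.1 he
    exact ⟨⟨e, Finset.mem_range.1 h1⟩, by simpa using h2, rfl⟩

theorem card_filter_not_dvd_succ {n κ g : ℕ} (hn : n + 1 = g * κ) :
    (Finset.univ.filter fun j : Fin n => ¬ κ ∣ (j : ℕ) + 1).card = n + 1 - g := by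
  have h := Finset.card_filter_add_card_filter_not (s := (Finset.univ : Finset (Fin n)))
    fun j : Fin n => κ ∣ (j : ℕ) + 1
  have hg : 0 < g := Nat.pos_of_ne_zero (by rintro rfl; simp at hn)
  rw [card_filter_dvd_succ hn, Finset.card_univ, Fintype.card_fin] at h
  omega

theorem card_sameCycle_wordProd {n κ g : ℕ} (hn : n + 1 = g * κ) {l : List (Fin n)}
    (hl : l.Nodup) (hmem : ∀ j : Fin n, j ∈ l ↔ ¬ κ ∣ (j : ℕ) + 1) (x : Fin (n + 1)) :
    (Finset.univ.filter ((permHom n ((csA n).wordProd l)).SameCycle x)).card = κ := by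
  rw [permHom_wordProd]
  set σ := (l.map fun j => swap j.castSucc j.succ).prod with hσ
  have hκ : 0 < κ := Nat.pos_of_ne_zero (by rintro rfl; simp at hn)
  have hiff : ∀ y, σ.SameCycle x y ↔ (x : ℕ) / κ = y / κ := by
    intro y
    constructor
    · refine apply_eq_of_sameCycle (f := fun x : Fin (n + 1) => (x : ℕ) / κ) fun z => ?_
      refine apply_prod_swap _ _ (fun x : Fin (n + 1) => (x : ℕ) / κ) l (fun j hj => ?_) z
      simp [Nat.succ_div_of_not_dvd ((hmem j).1 hj)]
    · let f : Fin (n + 1) → ℚ := fun y => if σ.SameCycle x y then 1 else 0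
      have hf : ∀ z, f (σ z) = f z := fun z => by simp [f]
      have hstep := apply_castSucc_eq_apply_succ hl hf
      have hmono : ∀ (d : ℕ) (y z : Fin (n + 1)), (y : ℕ) + d = z → (y : ℕ) / κ = z / κ →
          f y = f z := by
        intro d
        induction d with
        | zero => intro y z h _; rw [Fin.ext (show (y : ℕ) = z by simpa using h)]
        | succ d ih =>
          intro y z h hdiv
          have hle : (y : ℕ) / κ ≤ (y + d) / κ := Nat.div_le_div_right (by omega)
          have hle' : ((y : ℕ) + d) / κ ≤ (y + d + 1) / κ := Nat.div_le_div_right (by omega)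
          have hz : (y : ℕ) + d + 1 = z := by omega
          have h1 := ih y ⟨y + d, by omega⟩ rfl (by simp only; rw [hz] at hle'; omega)
          rw [h1]
          have h2 := hstep ⟨y + d, by omega⟩ ((hmem _).2 fun hdvd => ?_)
          · exact h2.trans (congrArg f (Fin.ext hz))
          · have := Nat.succ_div_of_dvd hdvd
            simp only [hz] at this
            omega
      intro h
      have hxy : f x = f y := by
        rcases le_total (x : ℕ) y with hle | hle
        · exact hmono (y - x) x y (by omega) h
        · exact (hmono (x - y) y x (by omega) h.symm).symm
      by_contra hne
      simp [f, hne, Perm.SameCycle.refl] at hxy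
  simp only [hiff]
  conv_rhs => rw [← Finset.card_range κ]
  have hx : (x : ℕ) / κ < g := by
    rw [Nat.div_lt_iff_lt_mul hκ, ← hn]
    exact x.2
  symm
  refine Finset.card_bij (fun t ht => ⟨κ * (x / κ) + t, ?_⟩) (fun t ht => ?_)
    (fun s _ t _ h => ?_) fun y hy => ?_
  · have : κ * (x / κ + 1) ≤ κ * g := Nat.mul_le_mul_left _ hx
    rw [mul_add, mul_comm κ g, ← hn] at this
    have := Finset.mem_range.1 ht
    omega
  · have := Finset.mem_range.1 ht
    simp [Nat.mul_add_div hκ, Nat.div_eq_of_lt this]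
  · simpa using h
  · have hy' : (x : ℕ) / κ = y / κ := by simpa using hy
    refine ⟨y % κ, Finset.mem_range.2 (Nat.mod_lt _ hκ), Fin.ext ?_⟩
    simp only [hy']
    exact Nat.div_add_mod _ _

theorem two_le_div_gcd {n i : ℕ} (hi1 : 1 ≤ i) (hin : i ≤ n) :
    2 ≤ (n + 1) / Nat.gcd (n + 1) i := by
  obtain ⟨κ, hκ⟩ := Nat.gcd_dvd_left (n + 1) i
  have hg : 0 < Nat.gcd (n + 1) i := Nat.gcd_pos_of_pos_left _ (by omega)
  have hgi : Nat.gcd (n + 1) i ≤ i := Nat.gcd_le_right _ (by omega)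
  generalize Nat.gcd (n + 1) i = g at *
  rw [hκ, Nat.mul_div_cancel_left _ hg]
  by_contra! h
  have := Nat.mul_le_mul_left g (show κ ≤ 1 by omega)
  omega

theorem isConj_wordProd {n i : ℕ} (hi1 : 1 ≤ i) (hin : i ≤ n) {l : List (Fin n)} (hl : l.Nodup)
    (hmem : ∀ j : Fin n, j ∈ l ↔ ¬ (n + 1) / Nat.gcd (n + 1) i ∣ (j : ℕ) + 1) :
    IsConj (segA n 1 n ^ i) ((csA n).wordProd l) := by
  rw [← isConj_permHom_iff, map_pow, permHom_segA, Perm.isConj_iff_cycleType_eq]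
  have h1 := cycleType_eq_replicate (two_le_div_gcd hi1 hin) (card_sameCycle_finRotate_pow n i)
  have h2 := cycleType_eq_replicate (two_le_div_gcd hi1 hin)
    (card_sameCycle_wordProd (Nat.mul_div_cancel' (Nat.gcd_dvd_left (n + 1) i)).symm hl hmem)
  exact h1.trans h2.symm

theorem le_length_add_gcd_of_isReflection {n i : ℕ} {v : WA n} (hv : IsConj (segA n 1 n ^ i) v)
    {l : List (WA n)} (hl : ∀ t ∈ l, (csA n).IsReflection t) (hprod : v = l.prod) :
    n + 1 ≤ l.length + Nat.gcd (n + 1) i := by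
  have hswap : ∀ t : {t // t ∈ l}, ∃ p : Fin (n + 1) × Fin (n + 1),
      permHom n t = swap p.1 p.2 := by
    rintro ⟨t, ht⟩
    obtain ⟨w, j, rfl⟩ := hl t ht
    refine ⟨(permHom n w j.castSucc, permHom n w j.succ), ?_⟩
    simp [Equiv.swap_apply_apply]
  choose p hp using hswap
  have hv' := isConj_permHom_iff.2 hv
  rw [map_pow, permHom_segA] at hv'
  refine (le_card_add_gcd_of_isConj hv' (l.attach.map p).toFinset fun f hf x => ?_).trans
    (Nat.add_le_add_right ((List.toFinset_card_le _).trans (by simp)) _)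
  have : permHom n v = (l.attach.map fun t => swap (p t).1 (p t).2).prod := by
    rw [hprod, map_list_prod]
    conv_lhs => rw [← List.attach_map_subtype_val l, List.map_map]
    exact congrArg List.prod (List.map_congr_left fun t _ => hp t)
  rw [this]
  exact apply_prod_swap _ _ f l.attach (fun t ht => hf _ (by simp)) x

theorem isReflection_of_mem_map_simple {n : ℕ} {l : List (Fin n)} :
    ∀ t ∈ l.map (csA n).simple, (csA n).IsReflection t := by
  intro t ht
  obtain ⟨j, -, rfl⟩ := List.mem_map.1 ht
  exact (csA n).isReflection_simple j

theorem le_length_add_gcd {n i : ℕ} {v : WA n} (hv : IsConj (segA n 1 n ^ i) v) :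
    n + 1 ≤ (csA n).length v + Nat.gcd (n + 1) i := by
  obtain ⟨l, hl, rfl⟩ := (csA n).exists_isReduced v
  rw [hl.eq]
  simpa using le_length_add_gcd_of_isReflection hv isReflection_of_mem_map_simple rfl

/-- A word of length `n + 1 - gcd (n + 1) i` for a conjugate of `(s_1 ⋯ s_n)^i` uses each simple
reflection whose label is not divisible by `(n + 1) / gcd (n + 1) i` exactly once. -/
theorem nodup_and_mem_iff_of_isConj {n i : ℕ} {l : List (Fin n)}
    (hconj : IsConj (segA n 1 n ^ i) ((csA n).wordProd l))
    (hlen : l.length = n + 1 - Nat.gcd (n + 1) i) :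
    l.Nodup ∧ ∀ j : Fin n, j ∈ l ↔ ¬ (n + 1) / Nat.gcd (n + 1) i ∣ (j : ℕ) + 1 := by
  have hconj' := isConj_permHom_iff.2 hconj
  rw [map_pow, permHom_segA, permHom_wordProd] at hconj'
  have hcard : n + 1 ≤ l.toFinset.card + Nat.gcd (n + 1) i := by
    refine (le_card_add_gcd_of_isConj hconj'
      (l.toFinset.image fun j => (j.castSucc, j.succ)) fun f hf x => ?_).trans
      (Nat.add_le_add_right Finset.card_image_le _)
    refine apply_prod_swap _ _ f l (fun j hj => ?_) x
    exact hf (j.castSucc, j.succ) (Finset.mem_image_of_mem _ (by simpa using hj))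
  have hnodup : l.Nodup := by
    rw [← Multiset.coe_nodup, ← Multiset.toFinset_card_eq_card_iff_nodup]
    have := l.toFinset_card_le
    change l.toFinset.card = l.length
    omega
  refine ⟨hnodup, ?_⟩
  have hsub : ∀ j : Fin n, j ∉ l → (n + 1) / Nat.gcd (n + 1) i ∣ (j : ℕ) + 1 := by
    intro j hj
    have hinv : ∀ x, (l.map fun j => swap j.castSucc j.succ).prod x ∈ Finset.Iic j.castSucc ↔
        x ∈ Finset.Iic j.castSucc := fun x => by
      refine iff_of_eq (apply_prod_swap _ _ (· ∈ Finset.Iic j.castSucc) l (fun k hk => ?_) x)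
      have : (k : ℕ) ≠ j := fun h => hj (Fin.ext h ▸ hk)
      simp only [eq_iff_iff, Finset.mem_Iic, Fin.le_iff_val_le_val, Fin.val_castSucc, Fin.val_succ]
      omega
    obtain ⟨τ, hτ⟩ := isConj_iff.1 hconj'
    rw [← hτ] at hinv
    have := dvd_card_of_invariant (card_sameCycle_conj (card_sameCycle_finRotate_pow n i)) hinv
    simpa using this
  have heq : (Finset.univ.filter fun j : Fin n => ¬ (n + 1) / Nat.gcd (n + 1) i ∣ (j : ℕ) + 1) =
      l.toFinset := by
    refine Finset.eq_of_subset_of_card_le (fun j hj => ?_) ?_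
    · by_contra hjl
      exact (Finset.mem_filter.1 hj).2 (hsub j (by simpa using hjl))
    · rw [card_filter_not_dvd_succ (Nat.mul_div_cancel' (Nat.gcd_dvd_left (n + 1) i)).symm, ← hlen]
      exact l.toFinset_card_le
  intro j
  rw [← List.mem_toFinset, ← heq]
  simp

/-- In type `Aₙ`, fix `1 ≤ i ≤ n`, let `κ = (n+1)/gcd(n+1,i)` and
`J = {j ∈ {1,…,n} : κ ∤ j}` (Bourbaki labels).  The set of minimal length elements of
the conjugacy class of `(s_1 ⋯ s_n)^i` equals the set of Coxeter elements of the
standard parabolic subgroup `W_J`; the minimal length equals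
`|J| = n + 1 − gcd(n+1,i)`, and it also equals the minimal reflection length among
elements of the class. -/
theorem typeA_min_length_conjugacy_class (n i : ℕ) (hi1 : 1 ≤ i) (hin : i ≤ n) :
    {w : WA n | IsConj ((segA n 1 n) ^ i) w ∧
        ∀ v : WA n, IsConj ((segA n 1 n) ^ i) v → (csA n).length w ≤ (csA n).length v}
      = {w : WA n | ∃ l : List (Fin n), l.Nodup ∧
          (∀ j : Fin n, j ∈ l ↔ ¬ ((n + 1) / Nat.gcd (n + 1) i ∣ (j : ℕ) + 1)) ∧
          w = (csA n).wordProd l} ∧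
    (Finset.univ.filter fun j : Fin n =>
        ¬ ((n + 1) / Nat.gcd (n + 1) i ∣ (j : ℕ) + 1)).card = n + 1 - Nat.gcd (n + 1) i ∧
    sInf {k : ℕ | ∃ v : WA n, IsConj ((segA n 1 n) ^ i) v ∧ k = (csA n).length v}
      = n + 1 - Nat.gcd (n + 1) i ∧
    sInf {k : ℕ | ∃ v : WA n, IsConj ((segA n 1 n) ^ i) v ∧ k = reflLenA n v}
      = n + 1 - Nat.gcd (n + 1) i := by

  have hn : n + 1 = Nat.gcd (n + 1) i * ((n + 1) / Nat.gcd (n + 1) i) :=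
    (Nat.mul_div_cancel' (Nat.gcd_dvd_left (n + 1) i)).symm
  have hcard := card_filter_not_dvd_succ hn
  have hlength : ∀ l : List (Fin n), l.Nodup →
      (∀ j : Fin n, j ∈ l ↔ ¬ ((n + 1) / Nat.gcd (n + 1) i ∣ (j : ℕ) + 1)) →
      l.length = n + 1 - Nat.gcd (n + 1) i := by
    intro l hl hmem
    rw [← hcard, ← List.toFinset_card_of_nodup hl]
    congr 1
    ext j
    simp [hmem]
  obtain ⟨l₀, hl₀, hmem₀⟩ : ∃ l : List (Fin n), l.Nodup ∧
      ∀ j : Fin n, j ∈ l ↔ ¬ ((n + 1) / Nat.gcd (n + 1) i ∣ (j : ℕ) + 1) :=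
    ⟨(Finset.univ.filter fun j : Fin n => ¬ ((n + 1) / Nat.gcd (n + 1) i ∣ (j : ℕ) + 1)).toList,
      Finset.nodup_toList _, by simp⟩
  have hconj₀ := isConj_wordProd hi1 hin hl₀ hmem₀
  have hle₀ := (csA n).length_wordProd_le l₀
  have hlen₀ := hlength l₀ hl₀ hmem₀
  refine ⟨?_, hcard, ?_, ?_⟩
  · ext w
    constructor
    · rintro ⟨hw, hmin⟩
      obtain ⟨l, hl, rfl⟩ := (csA n).exists_isReduced w
      have h1 := hmin _ hconj₀
      have h2 := le_length_add_gcd hw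
      rw [hl.eq] at h1 h2
      obtain ⟨hnodup, hmem⟩ := nodup_and_mem_iff_of_isConj hw (by omega)
      exact ⟨l, hnodup, hmem, rfl⟩
    · rintro ⟨l, hl, hmem, rfl⟩
      refine ⟨isConj_wordProd hi1 hin hl hmem, fun v hv => ?_⟩
      have h1 := (csA n).length_wordProd_le l
      have h2 := le_length_add_gcd hv
      have h3 := hlength l hl hmem
      omega
  · refine le_antisymm (le_trans (Nat.sInf_le ⟨_, hconj₀, rfl⟩) (by omega)) ?_
    refine le_csInf ⟨_, _, hconj₀, rfl⟩ ?_
    rintro _ ⟨v, hv, rfl⟩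
    have := le_length_add_gcd hv
    omega
  · refine le_antisymm (le_trans (Nat.sInf_le ⟨_, hconj₀, rfl⟩) ?_) ?_
    · exact Nat.sInf_le ⟨l₀.map (csA n).simple, isReflection_of_mem_map_simple, by simpa, rfl⟩
    · refine le_csInf ⟨_, _, hconj₀, rfl⟩ ?_
      rintro _ ⟨v, hv, rfl⟩
      obtain ⟨l, hl, rfl⟩ := (csA n).wordProd_surjective v
      refine le_csInf ⟨_, l.map (csA n).simple, isReflection_of_mem_map_simple, rfl, rfl⟩ ?_
      rintro _ ⟨l', hl', rfl, hprod⟩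
      have := le_length_add_gcd_of_isReflection hv hl' hprod
      omega
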